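/- Let ν be the uniform probability measure on [0,1] (Lebesgue measure restricted to [0,1]). Then the sequence of pushforward measures ν ∘ (φ^n)^{−1}, i.e., the iterates of the uniform distribution under the paradoxical map, converges weakly to the Dirac delta measure concentrated at the origin as n → ∞. -/

import Mathlib

open MeasureTheory

/-- The paradoxical map: `φ(x) = x/(1-x)` for `x ∈ (0, 1/2)`, `φ(x) = 2(1-x)` for
`x ∈ [1/2, 1]`, and `φ(x) = 0` otherwise (in particular `φ(0) = 0`). -/
noncomputable def psi (x : ℝ) : ℝ :=
  if 0 < x ∧ x < 1 / 2 then x / (1 - x)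
  else if 1 / 2 ≤ x ∧ x ≤ 1 then 2 * (1 - x)
  else 0

open Set Filter Topology

namespace Paradox

lemma psi_left {x : ℝ} (h0 : 0 ≤ x) (h1 : x ≤ 1 / 2) : psi x = x / (1 - x) := by
  unfold psi
  rcases h0.eq_or_lt with rfl | h0
  · norm_num
  · rcases h1.eq_or_lt with rfl | h1
    · norm_num
    · rw [if_pos ⟨h0, h1⟩]

lemma psi_right {x : ℝ} (h0 : 1 / 2 ≤ x) (h1 : x ≤ 1) : psi x = 2 * (1 - x) := by
  unfold psi
  rw [if_neg (by intro h; linarith [h.2]), if_pos ⟨h0, h1⟩]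

lemma continuousOn_psi : ContinuousOn psi (Icc 0 1) := by
  have h1 : ContinuousOn psi (Icc 0 (1 / 2)) := by
    have : ContinuousOn (fun x : ℝ => x / (1 - x)) (Icc 0 (1 / 2)) := by
      apply ContinuousOn.div (by fun_prop) (by fun_prop)
      intro x hx
      have := hx.2
      linarith
    exact this.congr (fun x hx => psi_left hx.1 hx.2)
  have h2 : ContinuousOn psi (Icc (1 / 2) 1) := by
    have : ContinuousOn (fun x : ℝ => 2 * (1 - x)) (Icc (1 / 2) 1) := by fun_prop
    exact this.congr (fun x hx => psi_right hx.1 hx.2)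
  have := h1.union_of_isClosed h2 isClosed_Icc isClosed_Icc
  rwa [Icc_union_Icc_eq_Icc (by norm_num) (by norm_num)] at this

lemma psi_maps : MapsTo psi (Icc 0 1) (Icc 0 1) := by
  intro x hx
  rcases le_total x (1 / 2) with h | h
  · rw [psi_left hx.1 h]
    have := hx.1
    constructor
    · exact div_nonneg this (by linarith)
    · rw [div_le_one (by linarith)]; linarith
  · rw [psi_right h hx.2]
    have := hx.2
    constructor <;> linarith

/-- transfer operator -/
noncomputable def T (g : ℝ → ℝ) (x : ℝ) : ℝ :=
  g (x / (1 + x)) / (1 + x) ^ 2 + g (1 - x / 2) / 2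

lemma a_maps : MapsTo (fun x : ℝ => x / (1 + x)) (Icc 0 1) (Icc 0 1) := by
  intro x hx
  have := hx.1
  exact ⟨div_nonneg this (by linarith), by rw [div_le_one (by linarith)]; linarith⟩

lemma b_maps : MapsTo (fun x : ℝ => 1 - x / 2) (Icc 0 1) (Icc 0 1) := by
  intro x hx
  have := hx.1
  have := hx.2
  constructor <;> simp only <;> linarith

lemma a_cont : ContinuousOn (fun x : ℝ => x / (1 + x)) (Icc 0 1) := by
  apply ContinuousOn.div (by fun_prop) (by fun_prop)
  intro x hx
  have := hx.1
  linarith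

lemma T_cont {g : ℝ → ℝ} (hg : ContinuousOn g (Icc 0 1)) : ContinuousOn (T g) (Icc 0 1) := by
  unfold T
  apply ContinuousOn.add
  · apply ContinuousOn.div (hg.comp a_cont a_maps) (by fun_prop)
    intro x hx
    have := hx.1
    positivity
  · exact (hg.comp (f := fun x : ℝ => 1 - x / 2) (by fun_prop) b_maps).div_const 2

lemma ii {g : ℝ → ℝ} (hg : ContinuousOn g (Icc 0 1)) {c d : ℝ} (hc : 0 ≤ c) (hcd : c ≤ d)
    (hd : d ≤ 1) : IntervalIntegrable g volume c d := by
  apply ContinuousOn.intervalIntegrable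
  rw [uIcc_of_le hcd]
  exact hg.mono (Icc_subset_Icc hc hd)

lemma integral_T {g : ℝ → ℝ} (hg : ContinuousOn g (Icc 0 1)) :
    ∫ x in (0 : ℝ)..1, T g x = ∫ x in (0 : ℝ)..1, g x := by
  have e1 : ∫ x in (0 : ℝ)..1, g (x / (1 + x)) / (1 + x) ^ 2 = ∫ x in (0 : ℝ)..(1 / 2), g x := by
    have := intervalIntegral.integral_comp_mul_deriv'' (a := 0) (b := 1)
      (f := fun x : ℝ => x / (1 + x)) (f' := fun x => 1 / (1 + x) ^ 2) (g := g)
      (by rw [uIcc_of_le zero_le_one]; exact a_cont)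
      (by
        intro x hx
        simp only [zero_le_one, inf_of_le_left, sup_of_le_right, mem_Ioo] at hx
        have h1 : (1 + x) ≠ 0 := by linarith
        have := (hasDerivAt_id' x).fun_div ((hasDerivAt_id' x).const_add 1) h1
        refine HasDerivAt.hasDerivWithinAt ?_
        exact this.congr_deriv (by ring))
      (by
        rw [uIcc_of_le zero_le_one]
        apply ContinuousOn.div (by fun_prop) (by fun_prop)
        intro x hx
        have := hx.1
        positivity)
      (by
        rw [uIcc_of_le zero_le_one]
        exact hg.mono (image_subset_iff.2 a_maps))
    norm_num at this
    norm_num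
    rw [← this]
    rfl
  have e2 : ∫ x in (0 : ℝ)..1, g (1 - x / 2) / 2 = ∫ x in (1 / 2 : ℝ)..1, g x := by
    rw [intervalIntegral.integral_div, intervalIntegral.integral_comp_sub_div g (by norm_num)]
    norm_num
  unfold T
  rw [intervalIntegral.integral_add, e1, e2]
  · exact intervalIntegral.integral_add_adjacent_intervals
      (ii hg le_rfl (by norm_num) (by norm_num)) (ii hg (by norm_num) (by norm_num) le_rfl)
  · apply ii _ le_rfl zero_le_one le_rfl
    apply ContinuousOn.div (hg.comp a_cont a_maps) (by fun_prop)
    intro x hx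
    have := hx.1
    positivity
  · apply ii _ le_rfl zero_le_one le_rfl
    exact (hg.comp (f := fun x : ℝ => 1 - x / 2) (by fun_prop) b_maps).div_const 2

/-- densities -/
noncomputable def g : ℕ → ℝ → ℝ
  | 0 => fun _ => 1
  | n + 1 => T (g n)

lemma g_cont (n : ℕ) : ContinuousOn (g n) (Icc 0 1) := by
  induction n with
  | zero => exact continuousOn_const
  | succ n ih => exact T_cont ih

lemma g_nonneg (n : ℕ) : ∀ x ∈ Icc (0 : ℝ) 1, 0 ≤ g n x := by
  induction n with
  | zero => intro x _; exact zero_le_one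
  | succ n ih =>
    intro x hx
    have h1 := ih _ (a_maps hx)
    have h2 := ih _ (b_maps hx)
    simp only at h1 h2
    simp only [g, T]
    positivity

lemma g_mass (n : ℕ) : ∫ x in (0 : ℝ)..1, g n x = 1 := by
  induction n with
  | zero => simp [g]
  | succ n ih => exact (integral_T (g_cont n)).trans ih

lemma psi_a {x : ℝ} (hx : x ∈ Icc (0 : ℝ) 1) : psi (x / (1 + x)) = x := by
  have h0 := hx.1
  have h1 := hx.2
  rw [psi_left (a_maps hx).1 (by rw [div_le_div_iff₀ (by linarith) (by norm_num)]; linarith)]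
  field_simp
  simp

lemma psi_b {x : ℝ} (hx : x ∈ Icc (0 : ℝ) 1) : psi (1 - x / 2) = x := by
  have h0 := hx.1
  have h1 := hx.2
  rw [psi_right (by linarith) (by linarith)]
  ring

lemma duality (n : ℕ) : ∀ F : ℝ → ℝ, ContinuousOn F (Icc 0 1) →
    ∫ x in (0 : ℝ)..1, F (psi^[n] x) = ∫ x in (0 : ℝ)..1, F x * g n x := by
  induction n with
  | zero => intro F _; simp [g]
  | succ n ih =>
    intro F hF
    have hc : ContinuousOn (fun x => F (psi x)) (Icc 0 1) := hF.comp continuousOn_psi psi_maps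
    have := ih (fun x => F (psi x)) hc
    simp only [Function.iterate_succ', Function.comp_apply]
    rw [this, ← integral_T (hc.fun_mul (g_cont n))]
    apply intervalIntegral.integral_congr
    intro x hx
    rw [uIcc_of_le zero_le_one] at hx
    simp only [T, g, psi_a hx, psi_b hx]
    ring

/-- density relative to the invariant density `1/(x(2-x))` -/
noncomputable def k (n : ℕ) (x : ℝ) : ℝ := x * (2 - x) * g n x

lemma k_succ (n : ℕ) {x : ℝ} (hx : 0 ≤ x) (_hx1 : x ≤ 1) :
    k (n + 1) x = (2 - x) / (2 + x) * k n (x / (1 + x)) + 2 * x / (2 + x) * k n (1 - x / 2) := by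
  simp only [k, g, T]
  have : 1 + x ≠ 0 := by linarith
  have : 2 + x ≠ 0 := by linarith
  field_simp
  ring

lemma k_bd (n : ℕ) : ∀ x ∈ Icc (0 : ℝ) 1, 0 ≤ k n x ∧ k n x ≤ 1 := by
  induction n with
  | zero =>
    intro x hx
    have h0 := hx.1
    have h1 := hx.2
    simp only [k, g]
    constructor <;> nlinarith
  | succ n ih =>
    intro x hx
    have h0 := hx.1
    have h1 := hx.2
    obtain ⟨p1, p2⟩ := ih _ (a_maps hx)
    obtain ⟨q1, q2⟩ := ih _ (b_maps hx)
    simp only at p1 p2 q1 q2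
    rw [k_succ n h0 h1]
    have w1 : 0 ≤ (2 - x) / (2 + x) := div_nonneg (by linarith) (by linarith)
    have w2 : 0 ≤ 2 * x / (2 + x) := by positivity
    have w : (2 - x) / (2 + x) + 2 * x / (2 + x) = 1 := by
      field_simp; ring
    constructor
    · positivity
    · nlinarith

lemma k_deriv (n : ℕ) : ∀ x ∈ Ioc (0 : ℝ) 1, ∃ d, HasDerivAt (k n) d x ∧ |x * d| ≤ 4 := by
  induction n with
  | zero =>
    intro x hx
    have h0 := hx.1
    have h1 := hx.2
    refine ⟨2 - 2 * x, ?_, ?_⟩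
    · have := ((hasDerivAt_id' x).fun_mul ((hasDerivAt_id' x).const_sub 2)).mul_const 1
      exact this.congr_deriv (by ring)
    · rw [abs_le]; constructor <;> nlinarith
  | succ n ih =>
    intro x hx
    have h0 := hx.1
    have h1 := hx.2
    have hx' : x ∈ Icc (0 : ℝ) 1 := ⟨h0.le, h1⟩
    have ha0 : 0 < x / (1 + x) := by positivity
    obtain ⟨p, hp, hpb⟩ := ih (x / (1 + x)) ⟨ha0, (a_maps hx').2⟩
    obtain ⟨q, hq, hqb⟩ := ih (1 - x / 2) ⟨by linarith, (b_maps hx').2⟩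
    obtain ⟨A0, A1⟩ := k_bd n _ (a_maps hx')
    obtain ⟨B0, B1⟩ := k_bd n _ (b_maps hx')
    simp only at A0 A1 B0 B1
    have n1 : 1 + x ≠ 0 := by linarith
    have n2 : 2 + x ≠ 0 := by linarith
    have da : HasDerivAt (fun x : ℝ => x / (1 + x)) (1 / (1 + x) ^ 2) x := by
      have := (hasDerivAt_id' x).fun_div ((hasDerivAt_id' x).const_add 1) n1
      exact this.congr_deriv (by ring)
    have db : HasDerivAt (fun x : ℝ => 1 - x / 2) (-(1 / 2)) x := by
      have := ((hasDerivAt_id' x).div_const 2).const_sub 1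
      exact this
    have dw1 : HasDerivAt (fun x : ℝ => (2 - x) / (2 + x)) (-4 / (2 + x) ^ 2) x := by
      have := ((hasDerivAt_id' x).const_sub 2).fun_div ((hasDerivAt_id' x).const_add 2) n2
      exact this.congr_deriv (by ring)
    have dw2 : HasDerivAt (fun x : ℝ => 2 * x / (2 + x)) (4 / (2 + x) ^ 2) x := by
      have := ((hasDerivAt_id' x).const_mul 2).fun_div ((hasDerivAt_id' x).const_add 2) n2
      exact this.congr_deriv (by ring)
    have D := (dw1.fun_mul (hp.comp x da)).fun_add (dw2.fun_mul (hq.comp x db))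
    have hev : k (n + 1) =ᶠ[𝓝 x] fun x =>
        (2 - x) / (2 + x) * k n (x / (1 + x)) + 2 * x / (2 + x) * k n (1 - x / 2) := by
      filter_upwards [lt_mem_nhds h0] with y hy
      simp only [k, g, T]
      have : 1 + y ≠ 0 := by linarith
      have : 2 + y ≠ 0 := by linarith
      field_simp
      ring
    refine ⟨_, D.congr_of_eventuallyEq hev, ?_⟩
    simp only [Function.comp_apply]
    set A := k n (x / (1 + x))
    set B := k n (1 - x / 2)
    set P := x / (1 + x) * p with hP
    set Q := (1 - x / 2) * q with hQ
    have n3 : 2 - x ≠ 0 := by linarith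
    have n3' : 0 < 2 - x := by linarith
    have e : x * (-4 / (2 + x) ^ 2 * A + (2 - x) / (2 + x) * (p * (1 / (1 + x) ^ 2)) +
        (4 / (2 + x) ^ 2 * B + 2 * x / (2 + x) * (q * -(1 / 2)))) =
        4 * x / (2 + x) ^ 2 * (B - A) + (2 - x) / ((2 + x) * (1 + x)) * P
          - 2 * x ^ 2 / ((2 + x) * (2 - x)) * Q := by
      rw [hP, hQ]
      field_simp
      ring
    rw [e]
    have c1 : 0 ≤ 4 * x / (2 + x) ^ 2 := by positivity
    have c2 : 0 ≤ (2 - x) / ((2 + x) * (1 + x)) := by positivity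
    have c3 : 0 ≤ 2 * x ^ 2 / ((2 + x) * (2 - x)) := by positivity
    have key : 4 * x / (2 + x) ^ 2 + (2 - x) / ((2 + x) * (1 + x)) * 4
        + 2 * x ^ 2 / ((2 + x) * (2 - x)) * 4 ≤ 4 := by
      have : 4 - (4 * x / (2 + x) ^ 2 + (2 - x) / ((2 + x) * (1 + x)) * 4
        + 2 * x ^ 2 / ((2 + x) * (2 - x)) * 4) =
        4 * x * ((2 + x) * ((4 + x) * (2 - x) - 2 * x * (1 + x)) - (1 + x) * (2 - x))
          / ((2 + x) ^ 2 * (1 + x) * (2 - x)) := by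
        field_simp
        ring
      have h : 0 ≤ 4 * x * ((2 + x) * ((4 + x) * (2 - x) - 2 * x * (1 + x)) - (1 + x) * (2 - x))
          / ((2 + x) ^ 2 * (1 + x) * (2 - x)) := by
        apply div_nonneg _ (by positivity)
        apply mul_nonneg (by positivity)
        nlinarith [mul_nonneg h0.le (sub_nonneg.2 h1), mul_nonneg (mul_nonneg h0.le h0.le) (sub_nonneg.2 h1)]
      linarith
    have hBA : |B - A| ≤ 1 := by rw [abs_le]; constructor <;> linarith
    calc _ ≤ |4 * x / (2 + x) ^ 2 * (B - A)| + |(2 - x) / ((2 + x) * (1 + x)) * P|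
          + |2 * x ^ 2 / ((2 + x) * (2 - x)) * Q| :=
          (abs_sub _ _).trans (add_le_add_left (abs_add_le _ _) _)
      _ = 4 * x / (2 + x) ^ 2 * |B - A| + (2 - x) / ((2 + x) * (1 + x)) * |P|
          + 2 * x ^ 2 / ((2 + x) * (2 - x)) * |Q| := by
          rw [abs_mul _ (B - A), abs_mul _ P, abs_mul _ Q, abs_of_nonneg c1, abs_of_nonneg c2,
            abs_of_nonneg c3]
      _ ≤ 4 * x / (2 + x) ^ 2 * 1 + (2 - x) / ((2 + x) * (1 + x)) * 4
          + 2 * x ^ 2 / ((2 + x) * (2 - x)) * 4 := by gcongr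
      _ ≤ 4 := by linarith

lemma k_lip (n : ℕ) {c : ℝ} (hc : 0 < c) {x y : ℝ} (hx : x ∈ Icc c 1) (hy : y ∈ Icc c 1) :
    |k n x - k n y| ≤ 4 / c * |x - y| := by
  have h : ∀ z ∈ Icc c 1, ∃ d, HasDerivAt (k n) d z ∧ |z * d| ≤ 4 := fun z hz =>
    k_deriv n z ⟨hc.trans_le hz.1, hz.2⟩
  choose! d hd hb using h
  have := (convex_Icc c 1).norm_image_sub_le_of_norm_hasDerivWithin_le (f := k n) (f' := d)
    (C := 4 / c) (fun z hz => (hd z hz).hasDerivWithinAt) (by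
      intro z hz
      have hz0 : 0 < z := hc.trans_le hz.1
      have h1 := hb z hz
      rw [abs_mul, abs_of_pos hz0] at h1
      rw [Real.norm_eq_abs, le_div_iff₀ hc]
      have := mul_le_mul_of_nonneg_right hz.1 (abs_nonneg (d z))
      linarith) hy hx
  simpa [Real.norm_eq_abs] using this

/-- difference over the two inverse branches -/
noncomputable def e (n : ℕ) (x : ℝ) : ℝ := k n (x / (1 + x)) - k n (1 - x / 2)

lemma k_cont (n : ℕ) : ContinuousOn (k n) (Icc 0 1) := by
  unfold k
  exact ContinuousOn.mul (by fun_prop) (g_cont n)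

lemma e_cont (n : ℕ) : ContinuousOn (e n) (Icc 0 1) := by
  unfold e
  exact ((k_cont n).comp a_cont a_maps).sub
    ((k_cont n).comp (f := fun x : ℝ => 1 - x / 2) (by fun_prop) b_maps)

noncomputable def I (n : ℕ) : ℝ := ∫ x in (0 : ℝ)..1, k n x * g n x

lemma I_succ (n : ℕ) : (2 / 9) * ∫ x in (0 : ℝ)..1, e n x ^ 2 ≤ I n - I (n + 1) := by
  unfold I
  have hc := (k_cont n).fun_mul (g_cont n)
  have hc' := (k_cont (n + 1)).fun_mul (g_cont (n + 1))
  rw [← integral_T hc, ← intervalIntegral.integral_sub (ii (T_cont hc) le_rfl zero_le_one le_rfl)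
    (ii hc' le_rfl zero_le_one le_rfl), ← intervalIntegral.integral_const_mul]
  apply intervalIntegral.integral_mono_on zero_le_one
  · exact ii (continuousOn_const.fun_mul ((e_cont n).fun_pow 2)) le_rfl zero_le_one le_rfl
  · exact ii ((T_cont hc).fun_sub hc') le_rfl zero_le_one le_rfl
  · intro x hx
    have h0 := hx.1
    have h1 := hx.2
    have n1 : 1 + x ≠ 0 := by linarith
    have n2 : 2 + x ≠ 0 := by linarith
    have : T (fun x => k n x * g n x) x - k (n + 1) x * g (n + 1) x
        = 2 / (2 + x) ^ 2 * e n x ^ 2 := by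
      simp only [T, k, g, e]
      field_simp
      ring
    have h2 : (2 : ℝ) / 9 ≤ 2 / (2 + x) ^ 2 := by
      apply div_le_div_of_nonneg_left (by norm_num) (by positivity)
      nlinarith
    calc _ ≤ 2 / (2 + x) ^ 2 * e n x ^ 2 := by gcongr
      _ = _ := this.symm

lemma I_nonneg (n : ℕ) : 0 ≤ I n := by
  apply intervalIntegral.integral_nonneg zero_le_one
  intro x hx
  exact mul_nonneg (k_bd n x hx).1 (g_nonneg n x hx)

lemma e2_nonneg (n : ℕ) : 0 ≤ ∫ x in (0 : ℝ)..1, e n x ^ 2 :=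
  intervalIntegral.integral_nonneg zero_le_one (fun x _ => sq_nonneg _)

lemma e2_tendsto : Tendsto (fun n => ∫ x in (0 : ℝ)..1, e n x ^ 2) atTop (𝓝 0) := by
  have hanti : Antitone I := antitone_nat_of_succ_le (fun n => by
    have := I_succ n
    have := e2_nonneg n
    linarith)
  have hlim := tendsto_atTop_ciInf hanti ⟨0, by rintro _ ⟨n, rfl⟩; exact I_nonneg n⟩
  have h2 := (hlim.sub (hlim.comp (tendsto_add_atTop_nat 1))).const_mul (9 / 2)
  simp only [sub_self, mul_zero] at h2
  refine squeeze_zero e2_nonneg (fun n => ?_) h2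
  have := I_succ n
  simp only [Function.comp_apply]
  linarith

lemma e_lip (n : ℕ) {c : ℝ} (hc : 0 < c) {x y : ℝ} (hx : x ∈ Icc c 1) (hy : y ∈ Icc c 1) :
    |e n x - e n y| ≤ (8 / c + 4) * |x - y| := by
  have key : ∀ z ∈ Icc c 1, z / (1 + z) ∈ Icc (c / 2) 1 ∧ 1 - z / 2 ∈ Icc (1 / 2 : ℝ) 1 := by
    intro z hz
    have h0 : 0 < z := hc.trans_le hz.1
    have h1 := hz.2
    have h2 := hz.1
    refine ⟨⟨?_, ?_⟩, ?_, ?_⟩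
    · rw [le_div_iff₀ (by linarith)]; nlinarith
    · rw [div_le_one (by linarith)]; linarith
    · linarith
    · linarith
  have h1 := k_lip n (half_pos hc) (key x hx).1 (key y hy).1
  have h2 := k_lip n (by norm_num : (0 : ℝ) < 1 / 2) (key x hx).2 (key y hy).2
  have hx0 : 0 < x := hc.trans_le hx.1
  have hy0 : 0 < y := hc.trans_le hy.1
  have h3 : |x / (1 + x) - y / (1 + y)| ≤ |x - y| := by
    have : x / (1 + x) - y / (1 + y) = (x - y) / ((1 + x) * (1 + y)) := by
      field_simp; ring
    rw [this, abs_div]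
    apply div_le_self (abs_nonneg _)
    rw [abs_of_pos (by positivity)]
    nlinarith [mul_pos hx0 hy0]
  have h4 : |(1 - x / 2) - (1 - y / 2)| = |x - y| / 2 := by
    have : (1 - x / 2) - (1 - y / 2) = -((x - y) / 2) := by ring
    rw [this, abs_neg, abs_div]; norm_num
  rw [h4] at h2
  have h5 : 4 / (c / 2) * |x / (1 + x) - y / (1 + y)| ≤ 4 / (c / 2) * |x - y| := by gcongr
  have h6 : 4 / (c / 2) = 8 / c := by field_simp; norm_num
  rw [h6] at h1 h5
  have : e n x - e n y = (k n (x / (1 + x)) - k n (y / (1 + y)))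
    - (k n (1 - x / 2) - k n (1 - y / 2)) := by unfold e; ring
  rw [this]
  refine (abs_sub _ _).trans ?_
  linarith

lemma e_tendsto {x : ℝ} (hx : x ∈ Ioc (0 : ℝ) 1) : Tendsto (fun n => e n x) atTop (𝓝 0) := by
  have h0 := hx.1
  have h1 := hx.2
  set L := 8 / (x / 2) + 4 with hL
  have hLp : 0 < L := by positivity
  have main : ∀ n, ∀ δ, 0 < δ → δ ≤ x / 2 →
      e n x ^ 2 ≤ 2 / δ * (∫ t in (0 : ℝ)..1, e n t ^ 2) + 2 * L ^ 2 * δ ^ 2 := by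
    intro n δ hδ hδx
    have hc : ContinuousOn (fun t => e n t ^ 2) (Icc 0 1) := (e_cont n).fun_pow 2
    have i1 : ∫ t in (x - δ)..x, e n x ^ 2 ≤ ∫ t in (x - δ)..x, (2 * e n t ^ 2 + 2 * L ^ 2 * δ ^ 2) := by
      apply intervalIntegral.integral_mono_on (by linarith) (by simp)
      · exact ii ((continuousOn_const.fun_mul hc).fun_add continuousOn_const) (by linarith) (by linarith) h1
      · intro t ht
        have ht1 := ht.1
        have ht2 := ht.2
        have hl := e_lip n (half_pos h0) (x := x) (y := t) ⟨by linarith, h1⟩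
          ⟨by linarith, by linarith⟩
        have : |e n x - e n t| ≤ L * δ := hl.trans (by
          gcongr
          rw [abs_of_nonneg] <;> linarith)
        have h3 : (e n x - e n t) ^ 2 ≤ (L * δ) ^ 2 := sq_le_sq' (by linarith [neg_abs_le (e n x - e n t)]) ((le_abs_self _).trans this)
        nlinarith [sq_nonneg (e n x - 2 * e n t)]
    have i2 : ∫ t in (x - δ)..x, e n t ^ 2 ≤ ∫ t in (0 : ℝ)..1, e n t ^ 2 := by
      apply intervalIntegral.integral_mono_interval (by linarith) (by linarith) h1
      · exact Eventually.of_forall (fun t => sq_nonneg _)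
      · exact ii hc le_rfl zero_le_one le_rfl
    rw [intervalIntegral.integral_add, intervalIntegral.integral_const_mul] at i1
    · simp only [intervalIntegral.integral_const, smul_eq_mul, sub_sub_cancel] at i1
      have : δ * e n x ^ 2 ≤ δ * (2 / δ * (∫ t in (0 : ℝ)..1, e n t ^ 2) + 2 * L ^ 2 * δ ^ 2) := by
        have e1 : δ * (2 / δ * (∫ t in (0 : ℝ)..1, e n t ^ 2) + 2 * L ^ 2 * δ ^ 2)
          = 2 * (∫ t in (0 : ℝ)..1, e n t ^ 2) + δ * (2 * L ^ 2 * δ ^ 2) := by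
          field_simp
        rw [e1]
        linarith
      exact le_of_mul_le_mul_left this hδ
    · exact ii (continuousOn_const.fun_mul hc) (by linarith) (by linarith) h1
    · simp
  have hsq : Tendsto (fun n => e n x ^ 2) atTop (𝓝 0) := by
    rw [Metric.tendsto_atTop]
    intro ε hε
    have hδ : ∃ δ, 0 < δ ∧ δ ≤ x / 2 ∧ 2 * L ^ 2 * δ ^ 2 < ε / 2 := by
      have t : Tendsto (fun δ : ℝ => 2 * L ^ 2 * δ ^ 2) (𝓝[>] 0) (𝓝 0) := by
        have : Continuous (fun δ : ℝ => 2 * L ^ 2 * δ ^ 2) := by fun_prop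
        have := this.tendsto 0
        simp only [ne_eq, OfNat.ofNat_ne_zero, not_false_eq_true, zero_pow, mul_zero] at this
        exact this.mono_left nhdsWithin_le_nhds
      have := (t.eventually_lt_const (half_pos hε)).and
        (Ioc_mem_nhdsGT (half_pos h0))
      obtain ⟨δ, h, h'⟩ := this.exists
      exact ⟨δ, h'.1, h'.2, h⟩
    obtain ⟨δ, d0, d1, d2⟩ := hδ
    have t := e2_tendsto.const_mul (2 / δ)
    rw [mul_zero] at t
    obtain ⟨N, hN⟩ := eventually_atTop.1 (t.eventually_lt_const (half_pos hε))
    refine ⟨N, fun n hn => ?_⟩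
    rw [Real.dist_eq, sub_zero, abs_of_nonneg (sq_nonneg _)]
    have := main n δ d0 d1
    have := hN n hn
    linarith
  have := hsq.sqrt
  simp only [Real.sqrt_sq_eq_abs, Real.sqrt_zero] at this
  exact (tendsto_zero_iff_abs_tendsto_zero _).2 this

/-- the second inverse branch -/
noncomputable def b (x : ℝ) : ℝ := 1 - x / 2

lemma step {x : ℝ} (hx : x ∈ Ioc (0 : ℝ) 1) :
    Tendsto (fun n => k (n + 1) x - k n (b x)) atTop (𝓝 0) := by
  have h0 := hx.1
  have := (e_tendsto hx).const_mul ((2 - x) / (2 + x))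
  rw [mul_zero] at this
  refine this.congr (fun n => ?_)
  rw [k_succ n hx.1.le hx.2]
  unfold e b
  field_simp
  ring

lemma b_mem {x : ℝ} (hx : x ∈ Ioc (0 : ℝ) 1) : b x ∈ Icc (1 / 2 : ℝ) 1 := by
  have h0 := hx.1
  have h1 := hx.2
  unfold b
  constructor <;> linarith

lemma b_mem' {x : ℝ} (hx : x ∈ Ioc (0 : ℝ) 1) : b x ∈ Ioc (0 : ℝ) 1 :=
  ⟨by linarith [(b_mem hx).1], (b_mem hx).2⟩

lemma steps (m : ℕ) : ∀ x ∈ Ioc (0 : ℝ) 1,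
    Tendsto (fun n => k (n + m) x - k n (b^[m] x)) atTop (𝓝 0) := by
  induction m with
  | zero => intro x _; simp
  | succ m ih =>
    intro x hx
    have h1 := ih (b x) (b_mem' hx)
    have h2 := (step hx).comp (tendsto_add_atTop_nat m)
    have := h2.add h1
    rw [add_zero] at this
    refine this.congr (fun n => ?_)
    simp only [Function.comp_apply, Function.iterate_succ, add_assoc]
    ring

lemma b_iter_mem (m : ℕ) : ∀ x ∈ Ioc (0 : ℝ) 1, b^[m + 1] x ∈ Icc (1 / 2 : ℝ) 1 := by
  induction m with
  | zero => intro x hx; exact b_mem hx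
  | succ m ih => intro x hx; exact ih (b x) (b_mem' hx)

lemma b_iter_dist (m : ℕ) : ∀ x y : ℝ, |b^[m] x - b^[m] y| = |x - y| * (1 / 2) ^ m := by
  induction m with
  | zero => intro x y; simp
  | succ m ih =>
    intro x y
    rw [Function.iterate_succ, Function.comp_apply, Function.comp_apply, ih]
    have : b x - b y = -((x - y) / 2) := by unfold b; ring
    rw [this, abs_neg, abs_div, abs_of_pos (by norm_num : (0 : ℝ) < 2)]
    ring

lemma k_const {x : ℝ} (hx : x ∈ Ioc (0 : ℝ) 1) :
    Tendsto (fun n => k n x - k n 1) atTop (𝓝 0) := by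
  have h1 : (1 : ℝ) ∈ Ioc (0 : ℝ) 1 := ⟨one_pos, le_rfl⟩
  rw [Metric.tendsto_atTop]
  intro ε hε
  obtain ⟨m, hm⟩ := exists_pow_lt_of_lt_one (show 0 < ε / 16 by positivity)
    (show (1 / 2 : ℝ) < 1 by norm_num)
  have t := (steps (m + 1) x hx).sub (steps (m + 1) 1 h1)
  rw [sub_zero] at t
  obtain ⟨N, hN⟩ := Metric.tendsto_atTop.1 t (ε / 2) (half_pos hε)
  refine ⟨N + (m + 1), fun n hn => ?_⟩
  obtain ⟨j, rfl⟩ := Nat.exists_eq_add_of_le' (show m + 1 ≤ n by omega)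
  have h2 := hN j (by omega)
  rw [Real.dist_eq, sub_zero] at h2 ⊢
  have h3 := k_lip j (by norm_num : (0 : ℝ) < 1 / 2) (b_iter_mem m x hx) (b_iter_mem m 1 h1)
  rw [b_iter_dist] at h3
  have h4 : |x - 1| ≤ 1 := by rw [abs_le]; constructor <;> linarith [hx.1, hx.2]
  have h5 : |x - 1| * (1 / 2) ^ (m + 1) ≤ 1 * (1 / 2) ^ m := by
    rw [pow_succ]
    have : (0 : ℝ) < (1 / 2) ^ m := by positivity
    nlinarith
  have h6 : |k j (b^[m + 1] x) - k j (b^[m + 1] 1)| < ε / 2 := by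
    norm_num at h3 h5 hm ⊢
    linarith
  have : k (j + (m + 1)) x - k (j + (m + 1)) 1 =
    (k (j + (m + 1)) x - k j (b^[m + 1] x) - (k (j + (m + 1)) 1 - k j (b^[m + 1] 1)))
    + (k j (b^[m + 1] x) - k j (b^[m + 1] 1)) := by ring
  rw [this]
  refine (abs_add_le _ _).trans_lt ?_
  linarith

lemma k_one : Tendsto (fun n => k n 1) atTop (𝓝 0) := by
  have main : ∀ δ, 0 < δ → δ < 1 → ∀ᶠ n in atTop, k n 1 * (-Real.log δ) ≤ 3 := by
    intro δ d0 d1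
    have hmem : ∀ {x}, x ∈ Icc δ 1 → x ∈ Icc (0 : ℝ) 1 := fun hx => ⟨d0.le.trans hx.1, hx.2⟩
    have hinv : ContinuousOn (fun x : ℝ => 1 / x) (Icc δ 1) :=
      ContinuousOn.div continuousOn_const continuousOn_id
        (fun x hx => (d0.trans_le hx.1).ne')
    have hii : ∀ {F : ℝ → ℝ}, ContinuousOn F (Icc δ 1) → IntervalIntegrable F volume δ 1 := by
      intro F hF
      apply ContinuousOn.intervalIntegrable
      rwa [uIcc_of_le d1.le]
    have hk : ∀ n, ContinuousOn (k n) (Icc δ 1) := fun n => (k_cont n).mono (fun _ => hmem)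
    have t : Tendsto (fun n => ∫ x in δ..1, (k n x - k n 1) * (1 / x)) atTop
        (𝓝 (∫ x in δ..1, (0 : ℝ))) := by
      apply intervalIntegral.tendsto_integral_filter_of_dominated_convergence (fun x => 1 / x)
      · refine Eventually.of_forall (fun n => ?_)
        have := (hii (((hk n).fun_sub (continuousOn_const (c := k n 1))).fun_mul hinv)).aestronglyMeasurable
        rwa [← uIoc_of_le d1.le] at this
      · refine Eventually.of_forall (fun n => Eventually.of_forall (fun x hx => ?_))
        rw [uIoc_of_le d1.le] at hx
        have x0 : 0 < x := d0.trans hx.1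
        have u := k_bd n x ⟨x0.le, hx.2⟩
        have v := k_bd n 1 ⟨zero_le_one, le_rfl⟩
        rw [Real.norm_eq_abs, abs_mul, abs_of_pos (by positivity : 0 < 1 / x)]
        have : |k n x - k n 1| ≤ 1 := by
          rw [abs_le]; constructor <;> linarith [u.1, u.2, v.1, v.2]
        have h : 0 < 1 / x := by positivity
        nlinarith
      · exact hii hinv
      · refine Eventually.of_forall (fun x hx => ?_)
        rw [uIoc_of_le d1.le] at hx
        have := (k_const (x := x) ⟨d0.trans hx.1, hx.2⟩).mul_const (1 / x)
        rwa [zero_mul] at this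
    simp only [intervalIntegral.integral_zero] at t
    filter_upwards [t.eventually_const_lt (show (-1 : ℝ) < 0 by norm_num)] with n hn
    have i1 : ∫ x in δ..1, (k n x - k n 1) * (1 / x) =
        (∫ x in δ..1, k n x * (1 / x)) - k n 1 * (-Real.log δ) := by
      simp only [sub_mul]
      rw [intervalIntegral.integral_sub (hii ((hk n).fun_mul hinv))
        (hii (continuousOn_const.fun_mul hinv)), intervalIntegral.integral_const_mul,
        integral_one_div_of_pos d0 one_pos]
      simp
    have i2 : ∫ x in δ..1, k n x * (1 / x) ≤ ∫ x in δ..1, 2 * g n x := by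
      apply intervalIntegral.integral_mono_on d1.le (hii ((hk n).fun_mul hinv))
      · exact hii (continuousOn_const.fun_mul ((g_cont n).mono (fun _ => hmem)))
      · intro x hx
        have x0 : 0 < x := d0.trans_le hx.1
        have hg := g_nonneg n x (hmem hx)
        have : k n x * (1 / x) = (2 - x) * g n x := by
          unfold k; field_simp
        rw [this]
        nlinarith
    have i3 : ∫ x in δ..1, 2 * g n x ≤ ∫ x in (0 : ℝ)..1, 2 * g n x := by
      apply intervalIntegral.integral_mono_interval d0.le d1.le le_rfl
      · rw [EventuallyLE, ae_restrict_iff' measurableSet_Ioc]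
        refine Eventually.of_forall (fun x hx => ?_)
        have := g_nonneg n x ⟨hx.1.le, hx.2⟩
        simp only [Pi.zero_apply]
        linarith
      · exact ii (continuousOn_const.fun_mul (g_cont n)) le_rfl zero_le_one le_rfl
    rw [intervalIntegral.integral_const_mul (2 : ℝ) (g n) (a := 0), g_mass] at i3
    linarith
  rw [Metric.tendsto_atTop]
  intro ε hε
  have := main (Real.exp (-(4 / ε))) (Real.exp_pos _) (by
    rw [Real.exp_lt_one_iff]
    have : 0 < 4 / ε := by positivity
    linarith)
  obtain ⟨N, hN⟩ := eventually_atTop.1 this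
  refine ⟨N, fun n hn => ?_⟩
  have h := hN n hn
  have hk := (k_bd n 1 ⟨zero_le_one, le_rfl⟩).1
  rw [Real.dist_eq, sub_zero, abs_of_nonneg hk]
  rw [Real.log_exp, neg_neg, ← mul_div_assoc, div_le_iff₀ hε] at h
  linarith

lemma k_zero {x : ℝ} (hx : x ∈ Ioc (0 : ℝ) 1) : Tendsto (fun n => k n x) atTop (𝓝 0) := by
  have := (k_const hx).add k_one
  simpa using this

lemma xg_tendsto : Tendsto (fun n => ∫ x in (0 : ℝ)..1, x * g n x) atTop (𝓝 0) := by
  have heq : ∀ n x, x ∈ Ioc (0 : ℝ) 1 → x * g n x = k n x / (2 - x) := by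
    intro n x hx
    have : 2 - x ≠ 0 := by linarith [hx.2]
    unfold k
    field_simp
  have t : Tendsto (fun n => ∫ x in (0 : ℝ)..1, x * g n x) atTop
        (𝓝 (∫ x in (0 : ℝ)..1, (0 : ℝ))) := by
    apply intervalIntegral.tendsto_integral_filter_of_dominated_convergence (fun x => 1)
    · refine Eventually.of_forall (fun n => ?_)
      have := (ii ((continuousOn_id' _).fun_mul (g_cont n)) le_rfl zero_le_one le_rfl).aestronglyMeasurable
      rwa [← uIoc_of_le zero_le_one] at this
    · refine Eventually.of_forall (fun n => Eventually.of_forall (fun x hx => ?_))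
      rw [uIoc_of_le zero_le_one] at hx
      have u := k_bd n x ⟨hx.1.le, hx.2⟩
      have h2 := hx.2
      rw [heq n x hx, Real.norm_eq_abs, abs_of_nonneg (div_nonneg u.1 (by linarith)),
        div_le_one (by linarith)]
      linarith [u.2]
    · simp
    · refine Eventually.of_forall (fun x hx => ?_)
      rw [uIoc_of_le zero_le_one] at hx
      have := (k_zero hx).div_const (2 - x)
      rw [zero_div] at this
      exact this.congr (fun n => (heq n x hx).symm)
  simpa using t

lemma weak (f : BoundedContinuousFunction ℝ ℝ) :
    Tendsto (fun n => ∫ x in (0 : ℝ)..1, f x * g n x) atTop (𝓝 (f 0)) := by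
  rw [Metric.tendsto_atTop]
  intro ε hε
  obtain ⟨δ, d0, hδ⟩ := Metric.continuous_iff.1 f.continuous 0 (ε / 2) (half_pos hε)
  set C := 2 * ‖f‖ / δ with hC
  have hCn : 0 ≤ C := by positivity
  have hb : ∀ x ∈ Icc (0 : ℝ) 1, |f x - f 0| ≤ ε / 2 + C * x := by
    intro x hx
    rcases lt_or_ge x δ with h | h
    · have := hδ x (by rw [Real.dist_eq, sub_zero, abs_of_nonneg hx.1]; exact h)
      rw [Real.dist_eq] at this
      have := mul_nonneg hCn hx.1
      linarith
    · have h1 : |f x - f 0| ≤ 2 * ‖f‖ := f.dist_le_two_norm x 0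
      have h2 : 2 * ‖f‖ = C * δ := by rw [hC]; field_simp
      have := mul_le_mul_of_nonneg_left h hCn
      linarith
  have t := xg_tendsto.const_mul C
  rw [mul_zero] at t
  obtain ⟨N, hN⟩ := eventually_atTop.1 (t.eventually_lt_const (half_pos hε))
  refine ⟨N, fun n hn => ?_⟩
  have hfc : ContinuousOn (fun x => f x) (Icc 0 1) := f.continuous.continuousOn
  have hg := g_cont n
  have e1 : (∫ x in (0 : ℝ)..1, f x * g n x) - f 0 = ∫ x in (0 : ℝ)..1, (f x - f 0) * g n x := by
    simp only [sub_mul]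
    rw [intervalIntegral.integral_sub (ii (hfc.fun_mul hg) le_rfl zero_le_one le_rfl)
      (ii (continuousOn_const.fun_mul hg) le_rfl zero_le_one le_rfl),
      intervalIntegral.integral_const_mul, g_mass, mul_one]
  rw [Real.dist_eq, e1]
  have e2 : |∫ x in (0 : ℝ)..1, (f x - f 0) * g n x| ≤
      ∫ x in (0 : ℝ)..1, (ε / 2 * g n x + C * (x * g n x)) := by
    refine (intervalIntegral.abs_integral_le_integral_abs zero_le_one).trans ?_
    apply intervalIntegral.integral_mono_on zero_le_one
    · exact ii ((hfc.fun_sub continuousOn_const).fun_mul hg).abs le_rfl zero_le_one le_rfl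
    · exact ii ((continuousOn_const.fun_mul hg).fun_add (continuousOn_const.fun_mul ((continuousOn_id' _).fun_mul hg)))
        le_rfl zero_le_one le_rfl
    · intro x hx
      have g0 := g_nonneg n x hx
      rw [abs_mul, abs_of_nonneg g0]
      have := mul_le_mul_of_nonneg_right (hb x hx) g0
      linarith
  rw [intervalIntegral.integral_add (ii (continuousOn_const.fun_mul hg) le_rfl zero_le_one le_rfl)
    (ii (continuousOn_const.fun_mul ((continuousOn_id' _).fun_mul hg)) le_rfl zero_le_one le_rfl),
    intervalIntegral.integral_const_mul, intervalIntegral.integral_const_mul, g_mass] at e2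
  have := hN n hn
  linarith

lemma measurable_psi : Measurable psi := by
  unfold psi
  refine Measurable.ite ?_ (by fun_prop) (Measurable.ite ?_ (by fun_prop) (by fun_prop))
  · exact measurableSet_Ioo
  · exact measurableSet_Icc

end Paradox

/-- The iterates of the uniform distribution on `[0,1]` under the paradoxical map converge
weakly to the Dirac measure at the origin: for every bounded continuous `f : ℝ → ℝ`,
`∫ f d(ν ∘ (φ^n)⁻¹) → f(0) = ∫ f dδ₀` as `n → ∞`, where `ν` is Lebesgue measure
restricted to `[0,1]`. -/
theorem stmt_12 (f : BoundedContinuousFunction ℝ ℝ) :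
    Filter.Tendsto
      (fun n : ℕ =>
        ∫ x, f x ∂(Measure.map (psi^[n]) (volume.restrict (Set.Icc (0 : ℝ) 1))))
      Filter.atTop (nhds (f 0)) := by
  refine (Paradox.weak f).congr (fun n => ?_)
  rw [integral_map (Paradox.measurable_psi.iterate n).aemeasurable
    f.continuous.aestronglyMeasurable, integral_Icc_eq_integral_Ioc,
    ← intervalIntegral.integral_of_le zero_le_one]
  exact (Paradox.duality n f f.continuous.continuousOn).symm
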